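/- arXiv:2201.03015 — 3 statements merged into one kernel-verified Lean document; each statement's English description precedes it below -/
import Mathlib

section
/- Suppose gcd(v, p) does not divide n. Then b_{v,r,a,m}(n) = Σ_{j=1}^{∞} (−1)^{j+1} [ b_{v,r,a,m}(n − (pr + a)j(3j − 1)/2) + b_{v,r,a,m}(n − (pr + a)j(3j + 1)/2) ], where b_{v,r,a,m}(x) is defined to be 0 for negative integers x and b_{v,r,a,m}(0) = 1 (the sum has only finitely many nonzero terms). Equivalently, Σ_{j ∈ ℤ} (−1)^{j} b_{v,r,a,m}(n − (pr + a)j(3j + 1)/2) = 0. -/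
/-- `b p a r m v n` is the number of partitions of `n` such that for every part, its
multiplicity is congruent to `j·a (mod p)` for some `0 ≤ j ≤ v - 1` and satisfies
`j(pr + a) ≤ multiplicity ≤ j(pr + a) + p(m - 1)`. -/
noncomputable def b (p a r m v n : ℕ) : ℕ :=
  Nat.card {π : n.Partition //
    ∀ i ∈ π.parts, ∃ j, j < v ∧
      π.parts.count i ≡ j * a [MOD p] ∧
      j * (p * r + a) ≤ π.parts.count i ∧
      π.parts.count i ≤ j * (p * r + a) + p * (m - 1)}

/-- The extension of `b p a r m v` to the integers, declared to vanish at negative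
arguments (note that `b p a r m v 0 = 1`). -/
noncomputable def bZ (p a r m v : ℕ) (x : ℤ) : ℤ :=
  if 0 ≤ x then (b p a r m v x.toNat : ℤ) else 0

open PowerSeries PowerSeries.WithPiTopology in
/-- Substituting `X ^ q` for `X` is continuous for the topology of coefficientwise convergence. -/
theorem continuous_powerSeries_expand {R : Type*} [CommRing R] [TopologicalSpace R]
    (q : ℕ) (hq : q ≠ 0) : Continuous (PowerSeries.expand q hq : R⟦X⟧ → R⟦X⟧) := by
  rw [continuous_iff_continuousAt]
  intro f
  rw [ContinuousAt, tendsto_iff_coeff_tendsto]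
  intro d
  simp only [coeff_expand]
  split_ifs
  · exact (continuous_coeff R _).continuousAt
  · exact tendsto_const_nhds

/-- Multiplicities admitted by `b p a r m v`. -/
def IsAdmissibleMultiplicity (p a r m v c : ℕ) : Prop :=
  ∃ j, j < v ∧ c ≡ j * a [MOD p] ∧ j * (p * r + a) ≤ c ∧ c ≤ j * (p * r + a) + p * (m - 1)

theorem isAdmissibleMultiplicity_iff {p a r m v : ℕ} (hp : 0 < p) (hm : 1 ≤ m) (c : ℕ) :
    IsAdmissibleMultiplicity p a r m v c ↔
      c ∈ (Finset.range v ×ˢ Finset.range m).image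
        (fun x : ℕ × ℕ ↦ x.1 * (p * r + a) + p * x.2) := by
  simp only [IsAdmissibleMultiplicity, Finset.mem_image, Finset.mem_product, Finset.mem_range,
    Prod.exists]
  have key (j : ℕ) : j * (p * r + a) ≡ j * a [MOD p] := by
    rw [show j * (p * r + a) = j * a + p * (j * r) by ring]
    exact Nat.add_mul_mod_self_left _ _ _
  constructor
  · rintro ⟨j, hj, hmod, hle, hub⟩
    obtain ⟨t, ht⟩ := (Nat.modEq_iff_dvd' hle).mp ((key j).trans hmod.symm)
    refine ⟨j, t, ⟨hj, ?_⟩, by omega⟩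
    have : p * t ≤ p * (m - 1) := by omega
    have := Nat.le_of_mul_le_mul_left this hp
    omega
  · rintro ⟨j, t, ⟨hj, ht⟩, rfl⟩
    refine ⟨j, hj, ?_, by omega, ?_⟩
    · exact Nat.ModEq.trans (by simp [Nat.ModEq]) (key j)
    · have : p * t ≤ p * (m - 1) := Nat.mul_le_mul_left p (by omega)
      omega

theorem injOn_admissibleMultiplicity {p a r m v : ℕ} (hp : 0 < p) (hco : Nat.gcd a p = 1)
    (hvp : v ≤ p) :
    Set.InjOn (fun x : ℕ × ℕ ↦ x.1 * (p * r + a) + p * x.2)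
      (Finset.range v ×ˢ Finset.range m : Finset (ℕ × ℕ)) := by
  rintro ⟨j, t⟩ hx ⟨k, s⟩ hy h
  simp only [Finset.coe_product, Finset.coe_range, Set.mem_prod, Set.mem_Iio] at hx hy h
  have hjk : j = k := by
    have hmod : j * a ≡ k * a [MOD p] := by
      have := congrArg (· % p) h
      have e (x y : ℕ) : x * (p * r + a) + p * y = x * a + p * (x * r + y) := by ring
      simp only [e, Nat.add_mul_mod_self_left] at this
      exact this
    have := Nat.ModEq.cancel_right_of_coprime (by rwa [Nat.gcd_comm]) hmod
    exact this.eq_of_lt_of_lt (by omega) (by omega)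
  subst hjk
  have : p * t = p * s := by omega
  rw [Nat.eq_of_mul_eq_mul_left hp this]

open PowerSeries PowerSeries.WithPiTopology in
/-- The generating function of `b p a r m v` as an infinite product. -/
theorem hasProd_powerSeriesMk_b {p a r m v : ℕ} (hp : 0 < p)
    (hco : Nat.gcd a p = 1) (hm : 1 ≤ m) (hv : 1 ≤ v) (hvp : v ≤ p) :
    HasProd (fun i : ℕ ↦ (∑ j ∈ Finset.range v, (X ^ ((i + 1) * (p * r + a)) : ℤ⟦X⟧) ^ j) *
        ∑ t ∈ Finset.range m, (X ^ ((i + 1) * p)) ^ t)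
      (PowerSeries.mk fun n ↦ (b p a r m v n : ℤ)) := by
  classical
  convert! Nat.Partition.hasProd_genFun
    (fun _ c ↦ if IsAdmissibleMultiplicity p a r m v c then (1 : ℤ) else 0) using 1
  · ext1 i
    have hsupp (c : ℕ) (hc : c ∉ (Finset.range v ×ˢ Finset.range m).image
        (fun x : ℕ × ℕ ↦ x.1 * (p * r + a) + p * x.2)) :
        (if IsAdmissibleMultiplicity p a r m v c then (1 : ℤ) else 0) •
          (X : ℤ⟦X⟧) ^ ((i + 1) * c) = 0 := by
      rw [← isAdmissibleMultiplicity_iff hp hm] at hc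
      simp [hc]
    have h0 : IsAdmissibleMultiplicity p a r m v 0 := ⟨0, hv, by simp [Nat.ModEq], by simp, by simp⟩
    have hsum := summable_of_ne_finset_zero (L := .unconditional ℕ) hsupp
    have hsplit := hsum.tsum_eq_zero_add
    rw [tsum_eq_sum (fun c hc ↦ hsupp c hc)] at hsplit
    simp only [h0, if_true, mul_zero, pow_zero, one_smul] at hsplit
    refine Eq.trans ?_ hsplit
    rw [Finset.sum_image (injOn_admissibleMultiplicity hp hco hvp),
      Finset.sum_mul_sum, ← Finset.sum_product']
    refine Finset.sum_congr rfl fun x hx ↦ ?_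
    rw [if_pos ((isAdmissibleMultiplicity_iff hp hm _).mpr (Finset.mem_image_of_mem _ hx)),
      one_smul, ← pow_mul, ← pow_mul, ← pow_add]
    congr 1
    ring
  · ext n
    rw [Nat.Partition.coeff_genFun, coeff_mk, b, Nat.card_eq_fintype_card, Fintype.card_subtype,
      Finset.card_filter, Nat.cast_sum]
    refine Finset.sum_congr rfl fun π _ ↦ ?_
    rw [Finsupp.prod, Finset.prod_boole]
    simp [IsAdmissibleMultiplicity]

open PowerSeries PowerSeries.WithPiTopology in
/-- Multiplying the generating function of `b p a r m v` by the pentagonal series in `X ^ (pr + a)`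
leaves only powers of `X ^ gcd v p`. -/
theorem coeff_powerSeriesMk_b_mul_pentagonalSeries {p a r m v : ℕ} (hp : 0 < p)
    (hA : p * r + a ≠ 0) (hco : Nat.gcd a p = 1) (hm : 1 ≤ m) (hv : 1 ≤ v) (hvp : v ≤ p)
    {n : ℕ} (hn : ¬ Nat.gcd v p ∣ n) :
    ((PowerSeries.mk fun n ↦ (b p a r m v n : ℤ)) *
      PowerSeries.expand (p * r + a) hA (pentagonalSeries ℤ)).coeff n = 0 := by
  have hd : Nat.gcd v p ≠ 0 := (Nat.gcd_pos_of_pos_right v hp).ne'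
  have hprod := (hasProd_powerSeriesMk_b (r := r) hp hco hm hv hvp).mul
    ((hasProd_one_sub_X_pow ℤ).map (PowerSeries.expand (p * r + a) hA)
      (continuous_powerSeries_expand _ _))
  rw [HasProd, tendsto_iff_coeff_tendsto] at hprod
  refine tendsto_nhds_unique (hprod n) (tendsto_const_nhds.congr fun s ↦ ?_)
  have hmem {k : ℕ} (hk : Nat.gcd v p ∣ k) :
      (X : ℤ⟦X⟧) ^ k ∈ (PowerSeries.expand (R := ℤ) (Nat.gcd v p) hd).range := by
    obtain ⟨l, rfl⟩ := hk
    exact ⟨X ^ l, by simp [pow_mul]⟩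
  obtain ⟨f, hf⟩ : ∏ i ∈ s, ((∑ j ∈ Finset.range v, (X ^ ((i + 1) * (p * r + a)) : ℤ⟦X⟧) ^ j) *
      (∑ t ∈ Finset.range m, (X ^ ((i + 1) * p)) ^ t) *
      ((PowerSeries.expand (p * r + a) hA) ∘ fun i ↦ (1 - X ^ (i + 1) : ℤ⟦X⟧)) i) ∈
      (PowerSeries.expand (R := ℤ) (Nat.gcd v p) hd).range := by
    refine Subalgebra.prod_mem _ fun i _ ↦ ?_
    have : ((PowerSeries.expand (p * r + a) hA) ∘ fun i ↦ (1 - X ^ (i + 1) : ℤ⟦X⟧)) i =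
        1 - X ^ ((i + 1) * (p * r + a)) := by
      simp [← pow_mul, mul_comm]
    rw [this, mul_right_comm, geom_sum_mul_neg]
    refine mul_mem (sub_mem (one_mem _) ?_) (sum_mem fun t _ ↦ pow_mem (hmem ?_) t)
    · rw [← pow_mul]
      exact hmem ((Nat.gcd_dvd_left v p).mul_left _)
    · exact (Nat.gcd_dvd_right v p).mul_left _
  rw [← hf]
  exact (coeff_expand_of_not_dvd _ hd _ hn).symm

open PowerSeries PowerSeries.WithPiTopology in
theorem hasSum_negOnePow_mul_bZ {p a r m v : ℕ} (hA : p * r + a ≠ 0) (n : ℕ) :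
    HasSum (fun k : ℤ ↦ (Int.negOnePow k : ℤ) *
        bZ p a r m v (n - ((p * r + a) * pentagonal k : ℕ)))
      (((PowerSeries.mk fun n ↦ (b p a r m v n : ℤ)) *
        PowerSeries.expand (p * r + a) hA (pentagonalSeries ℤ)).coeff n) := by
  have h := (((hasSum_pentagonalSeries ℤ).map (PowerSeries.expand (p * r + a) hA)
    (continuous_powerSeries_expand _ _)).mul_left
      (PowerSeries.mk fun n ↦ (b p a r m v n : ℤ))).map (coeff n) (continuous_coeff ℤ n)
  refine h.congr_fun fun k ↦ ?_
  have hC : (((Int.negOnePow k : ℤ) : ℤ⟦X⟧)) = C (Int.negOnePow k : ℤ) := by simp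
  simp only [Function.comp_apply, map_mul, map_pow, expand_X, hC, expand_C, ← pow_mul]
  rw [mul_left_comm, coeff_C_mul, coeff_mul_X_pow']
  congr 1
  simp only [bZ, coeff_mk]
  split_ifs <;> first | omega | rfl | skip
  congr 2
  omega

/-- **A pentagonal-number recurrence.** If `gcd(v, p)` does not divide `n`, then
`b_{v,r,a,m}(n) = Σ_{j=1}^∞ (-1)^{j+1} [b_{v,r,a,m}(n - (pr+a)j(3j-1)/2) +
b_{v,r,a,m}(n - (pr+a)j(3j+1)/2)]` (only finitely many terms are nonzero; the summation
index below is shifted, `j + 1` playing the role of `j ≥ 1`). -/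
theorem b_recurrence (p a r m v : ℕ) (hp : 0 < p) (ha : 0 < a)
    (hco : Nat.gcd a p = 1) (hm : 1 ≤ m) (hv : 1 ≤ v) (hvp : v ≤ p)
    (n : ℕ) (hn : ¬ Nat.gcd v p ∣ n) :
    (b p a r m v n : ℤ) =
      ∑' j : ℕ,
        (-1 : ℤ) ^ (j + 1 + 1) *
          (bZ p a r m v
              ((n : ℤ) - ((p : ℤ) * r + a) * ((j : ℤ) + 1) * (3 * ((j : ℤ) + 1) - 1) / 2) +
           bZ p a r m v
              ((n : ℤ) - ((p : ℤ) * r + a) * ((j : ℤ) + 1) * (3 * ((j : ℤ) + 1) + 1) / 2)) := by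
  have hA : p * r + a ≠ 0 := by omega
  have h := (hasSum_negOnePow_mul_bZ (m := m) (v := v) hA n).nat_add_neg
  rw [coeff_powerSeriesMk_b_mul_pentagonalSeries hp hA hco hm hv hvp hn,
    ← hasSum_nat_add_iff' 1] at h
  have h0 : bZ p a r m v n = b p a r m v n := by simp [bZ]
  have hpent (k : ℕ) : ((p : ℤ) * r + a) * ((k : ℤ) + 1) * (3 * ((k : ℤ) + 1) - 1) / 2 =
      ((p * r + a) * pentagonal ((k + 1 : ℕ) : ℤ) : ℕ) := by
    have := two_mul_natCast_pentagonal ((k + 1 : ℕ) : ℤ)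
    refine Int.ediv_eq_of_eq_mul_right two_ne_zero ?_
    push_cast at this ⊢
    linear_combination -((p : ℤ) * r + a) * this
  have hpent_neg (k : ℕ) : ((p : ℤ) * r + a) * ((k : ℤ) + 1) * (3 * ((k : ℤ) + 1) + 1) / 2 =
      ((p * r + a) * pentagonal (-((k + 1 : ℕ) : ℤ)) : ℕ) := by
    have := two_mul_natCast_pentagonal_neg ((k + 1 : ℕ) : ℤ)
    refine Int.ediv_eq_of_eq_mul_right two_ne_zero ?_
    push_cast at this ⊢
    linear_combination -((p : ℤ) * r + a) * this
  have hp0 : pentagonal 0 = 0 := by simp [pentagonal_def]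
  have h' := h.neg.tsum_eq
  simp only [Finset.range_one, Finset.sum_singleton, Nat.cast_zero, neg_zero, hp0, mul_zero,
    sub_zero, Int.negOnePow_zero, Units.val_one, one_mul, h0] at h'
  refine Eq.trans (by ring) (h'.symm.trans (tsum_congr fun k ↦ ?_))
  rw [hpent, hpent_neg, Int.negOnePow_neg, Int.coe_negOnePow_natCast]
  ring
end

section
/- Let p ≥ 5 be prime, let a be a positive integer not divisible by p, let r ≥ 0 and m ≥ 1 be integers, and let t be an integer with 0 ≤ t < p such that 8·t·a⁻¹ + 1 is a quadratic nonresidue modulo p, where a⁻¹ denotes the multiplicative inverse of a modulo p. Then for all n ≥ 0, b_{4,r,a,m}(pn + t) ≡ 0 (mod 2). -/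
open Finset PowerSeries

/-- The finite `q`-Pochhammer symbol `(q; q)_n` as a rational power series. -/
noncomputable def qPochhammer (n : ℕ) : ℚ⟦X⟧ := ∏ i ∈ range n, (1 - X ^ (i + 1))

/-- The Gaussian binomial coefficient `[a + b choose a]` as a rational power series. -/
noncomputable def gaussBinom (a b : ℕ) : ℚ⟦X⟧ :=
  qPochhammer (a + b) * (qPochhammer a * qPochhammer b)⁻¹

theorem qPochhammer_succ (n : ℕ) :
    qPochhammer (n + 1) = qPochhammer n * (1 - X ^ (n + 1)) :=
  prod_range_succ _ _

theorem constantCoeff_qPochhammer (n : ℕ) : constantCoeff (qPochhammer n) = 1 := by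
  simp [qPochhammer, map_prod]

theorem qPochhammer_ne_zero (n : ℕ) : qPochhammer n ≠ 0 := fun h => by
  simpa [h] using constantCoeff_qPochhammer n

theorem gaussBinom_mul (a b : ℕ) :
    gaussBinom a b * (qPochhammer a * qPochhammer b) = qPochhammer (a + b) := by
  rw [gaussBinom, mul_assoc, PowerSeries.inv_mul_cancel, mul_one]
  simp [constantCoeff_qPochhammer]

theorem eq_gaussBinom {a b : ℕ} {f : ℚ⟦X⟧}
    (h : f * (qPochhammer a * qPochhammer b) = qPochhammer (a + b)) : f = gaussBinom a b :=
  mul_right_cancel₀ (mul_ne_zero (qPochhammer_ne_zero a) (qPochhammer_ne_zero b))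
    (h.trans (gaussBinom_mul a b).symm)

theorem gaussBinom_zero_left (b : ℕ) : gaussBinom 0 b = 1 :=
  (eq_gaussBinom (by simp [qPochhammer])).symm

theorem gaussBinom_zero_right (a : ℕ) : gaussBinom a 0 = 1 :=
  (eq_gaussBinom (by simp [qPochhammer])).symm

theorem gaussBinom_comm (a b : ℕ) : gaussBinom a b = gaussBinom b a :=
  eq_gaussBinom (by rw [mul_comm (qPochhammer b), gaussBinom_mul, add_comm])

theorem gaussBinom_succ_succ (a b : ℕ) :
    gaussBinom (a + 1) (b + 1) = gaussBinom (a + 1) b + X ^ (b + 1) * gaussBinom a (b + 1) := by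
  refine (eq_gaussBinom ?_).symm
  have h₁ := gaussBinom_mul (a + 1) b
  have h₂ := gaussBinom_mul a (b + 1)
  rw [show a + 1 + b = a + b + 1 by ring, qPochhammer_succ a] at h₁
  rw [show a + (b + 1) = a + b + 1 by ring, qPochhammer_succ b] at h₂
  rw [show a + 1 + (b + 1) = a + b + 1 + 1 by ring, qPochhammer_succ (a + b + 1),
    qPochhammer_succ a, qPochhammer_succ b]
  linear_combination (1 - X ^ (b + 1)) * h₁ + X ^ (b + 1) * (1 - X ^ (a + 1)) * h₂

/-- The `q`-binomial theorem. -/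
theorem prod_add_X_pow (y : ℚ⟦X⟧) (N : ℕ) :
    ∏ i ∈ range N, (y + X ^ i) =
      ∑ ab ∈ antidiagonal N, X ^ (∑ i ∈ range ab.1, i) * gaussBinom ab.1 ab.2 * y ^ ab.2 := by
  induction N with
  | zero => simp [gaussBinom_zero_left]
  | succ N ih =>
    let T : ℕ → ℕ → ℚ⟦X⟧ := fun a b => X ^ (∑ i ∈ range a, i) * gaussBinom a b * y ^ b
    let F : ℕ × ℕ → ℚ⟦X⟧ := fun ab => Nat.casesOn ab.2 0 fun b => T ab.1 b * y
    let G : ℕ × ℕ → ℚ⟦X⟧ := fun ab => Nat.casesOn ab.1 0 fun a => T a ab.2 * X ^ N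
    have hF : ∑ ab ∈ antidiagonal (N + 1), F ab = ∑ ab ∈ antidiagonal N, T ab.1 ab.2 * y := by
      simp [Finset.Nat.sum_antidiagonal_succ', F]
    have hG : ∑ ab ∈ antidiagonal (N + 1), G ab = ∑ ab ∈ antidiagonal N, T ab.1 ab.2 * X ^ N := by
      simp [Finset.Nat.sum_antidiagonal_succ, G]
    have key : ∀ ab ∈ antidiagonal (N + 1), T ab.1 ab.2 = F ab + G ab := by
      rintro ⟨_ | a, _ | b⟩ h <;> simp only [HasAntidiagonal.mem_antidiagonal] at h
      · omega
      · simp [F, G, T, gaussBinom_zero_left, pow_succ]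
      · obtain rfl : a = N := by omega
        simp [F, G, T, gaussBinom_zero_right, sum_range_succ, pow_add]
      · obtain rfl : a + b + 1 = N := by omega
        simp only [F, G, T, gaussBinom_succ_succ, sum_range_succ, pow_add, pow_one]
        ring
    rw [prod_range_succ, ih, sum_congr rfl key, sum_add_distrib, hF, hG, ← sum_mul, ← sum_mul,
      mul_add]

theorem two_mul_sum_range_succ_id (n : ℕ) : 2 * ∑ i ∈ range (n + 1), i = n * (n + 1) := by
  rw [mul_comm, sum_range_id_mul_two]; simp [mul_comm]

/-- A finite form of Gauss's triangular number identity. -/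
theorem sum_X_pow_triangular_mul_gaussBinom (n : ℕ) :
    ∑ k ∈ range (n + 1), X ^ (∑ i ∈ range (k + 1), i) * gaussBinom (n - k) (n + 1 + k) =
      ∏ i ∈ range n, (1 + X ^ (i + 1)) ^ 2 := by
  have h := prod_add_X_pow (X ^ n) ((n + 1) + n)
  set E := n * n + ∑ i ∈ range (n + 1), i with hE
  have hL : ∏ i ∈ range (n + 1 + n), ((X : ℚ⟦X⟧) ^ n + X ^ i) =
      2 * X ^ E * ∏ i ∈ range n, (1 + X ^ (i + 1)) ^ 2 := by
    have h₁ : ∏ i ∈ range n, ((X : ℚ⟦X⟧) ^ n + X ^ i) =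
        X ^ (∑ i ∈ range n, i) * ∏ i ∈ range n, (1 + X ^ (i + 1)) := by
      rw [← prod_pow_eq_pow_sum, ← prod_range_reflect (fun i => 1 + X ^ (i + 1)),
        ← prod_mul_distrib]
      refine prod_congr rfl fun i hi => ?_
      have hi := mem_range.1 hi
      rw [mul_add, mul_one, ← pow_add, show i + (n - 1 - i + 1) = n by omega, add_comm]
    have h₂ : ∏ i ∈ range n, ((X : ℚ⟦X⟧) ^ n + X ^ (n + 1 + i)) =
        X ^ (n * n) * ∏ i ∈ range n, (1 + X ^ (i + 1)) := by
      have : X ^ (n * n) = ∏ i ∈ range n, (X : ℚ⟦X⟧) ^ n := by simp [pow_mul]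
      rw [this, ← prod_mul_distrib]
      refine prod_congr rfl fun i _ => ?_
      ring
    rw [prod_range_add, prod_range_succ, h₁, h₂, prod_pow, hE, sum_range_succ]
    ring
  have hR : ∑ ab ∈ antidiagonal (n + 1 + n),
      X ^ (∑ i ∈ range ab.1, i) * gaussBinom ab.1 ab.2 * (X ^ n) ^ ab.2 =
      2 * X ^ E * ∑ k ∈ range (n + 1),
        X ^ (∑ i ∈ range (k + 1), i) * gaussBinom (n - k) (n + 1 + k) := by
    rw [Nat.sum_antidiagonal_eq_sum_range_succ_mk, show (n + 1 + n).succ = (n + 1) + (n + 1) by omega,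
      sum_range_add, ← sum_range_reflect, mul_assoc, two_mul, mul_sum]
    congr 1 <;> refine sum_congr rfl fun k hk => ?_
    all_goals
      obtain ⟨l, rfl⟩ := Nat.exists_eq_add_of_le (Nat.lt_succ_iff.1 (mem_range.1 hk))
    · rw [show k + l + 1 - 1 - k = l by omega, show k + l + 1 + (k + l) - l = k + l + 1 + k by omega,
        show k + l - k = l by omega, ← mul_assoc, mul_right_comm, ← pow_mul, ← pow_add, ← pow_add]
      congr 2
      have h₁ := two_mul_sum_range_succ_id (k + l)
      have h₂ := two_mul_sum_range_succ_id k
      have h₃ := two_mul_sum_range_succ_id l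
      rw [sum_range_succ] at h₃
      rw [hE]
      nlinarith
    · rw [show k + l + 1 + (k + l) - (k + l + 1 + k) = l by omega,
        show k + l - k = l by omega, gaussBinom_comm, ← mul_assoc, mul_right_comm, ← pow_mul,
        ← pow_add, ← pow_add]
      congr 2
      have h₁ := two_mul_sum_range_succ_id (k + l)
      have h₂ := two_mul_sum_range_succ_id k
      have h₃ := two_mul_sum_range_succ_id (k + l + k)
      rw [show k + l + k + 1 = k + l + 1 + k by ring] at h₃
      rw [hE]
      nlinarith
  rw [hL, hR] at h
  have h2 : (2 : ℚ⟦X⟧) ≠ 0 := fun h =>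
    two_ne_zero ((map_ofNat (constantCoeff (R := ℚ)) 2).symm.trans (by rw [h, map_zero]))
  exact (mul_left_cancel₀ (mul_ne_zero h2 (pow_ne_zero _ X_ne_zero)) h).symm

theorem X_pow_dvd_prod_one_sub_sub_one {R ι : Type*} [CommRing R] (m : ℕ) (s : Finset ι)
    (e : ι → ℕ) (he : ∀ i ∈ s, m ≤ e i) :
    (X : R⟦X⟧) ^ m ∣ ∏ i ∈ s, (1 - X ^ e i) - 1 := by
  classical
  induction s using Finset.induction_on with
  | empty => simp
  | insert i s hi ih =>
    rw [prod_insert hi]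
    have h₁ := ih fun j hj => he j (mem_insert_of_mem hj)
    have h₂ : (X : R⟦X⟧) ^ m ∣ X ^ e i := pow_dvd_pow _ (he i (mem_insert_self i s))
    convert dvd_sub h₁ (h₂.mul_right (∏ i ∈ s, (1 - X ^ e i))) using 1
    ring

theorem X_pow_dvd_gaussBinom_mul_qPochhammer_sub_one (k l : ℕ) :
    X ^ (l + 1) ∣ gaussBinom l (k + l + 1 + k) * qPochhammer (k + l) - 1 := by
  have h : gaussBinom l (k + l + 1 + k) * qPochhammer (k + l) =
      (∏ i ∈ range l, (1 - X ^ (k + l + 1 + k + i + 1))) * ∏ i ∈ range k, (1 - X ^ (l + i + 1)) := by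
    apply mul_right_cancel₀
      (mul_ne_zero (qPochhammer_ne_zero l) (qPochhammer_ne_zero (k + l + 1 + k)))
    have h₁ := gaussBinom_mul l (k + l + 1 + k)
    have h₂ : qPochhammer (k + l) = qPochhammer l * ∏ i ∈ range k, (1 - X ^ (l + i + 1)) := by
      rw [add_comm, qPochhammer, prod_range_add, qPochhammer]
    have h₃ : qPochhammer (l + (k + l + 1 + k)) = qPochhammer (k + l + 1 + k) *
        ∏ i ∈ range l, (1 - X ^ (k + l + 1 + k + i + 1)) := by
      rw [add_comm l, qPochhammer, prod_range_add, qPochhammer]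
    rw [mul_right_comm, h₁, h₂, h₃]
    ring
  have h₁ := X_pow_dvd_prod_one_sub_sub_one (R := ℚ) (l + 1) (range l)
    (fun i => k + l + 1 + k + i + 1) (fun i _ => by omega)
  have h₂ := X_pow_dvd_prod_one_sub_sub_one (R := ℚ) (l + 1) (range k)
    (fun i => l + i + 1) (fun i _ => by omega)
  rw [h]
  convert dvd_add (h₁.mul_right (∏ i ∈ range k, (1 - X ^ (l + i + 1)))) h₂ using 1
  ring

/-- Gauss's triangular number identity, modulo `X ^ (n + 1)`. -/
theorem X_pow_dvd_prod_sub_sum_triangular (n : ℕ) :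
    (X : ℚ⟦X⟧) ^ (n + 1) ∣ ∏ i ∈ range n, ((1 + X ^ (i + 1)) ^ 2 * (1 - X ^ (i + 1))) -
      ∑ k ∈ range (n + 1), X ^ (∑ i ∈ range (k + 1), i) := by
  rw [prod_mul_distrib, ← sum_X_pow_triangular_mul_gaussBinom, ← qPochhammer, sum_mul,
    ← sum_sub_distrib]
  refine dvd_sum fun k hk => ?_
  obtain ⟨l, rfl⟩ := Nat.exists_eq_add_of_le (Nat.lt_succ_iff.1 (mem_range.1 hk))
  rw [show k + l - k = l by omega, mul_assoc, ← mul_sub_one]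
  have h₁ : (X : ℚ⟦X⟧) ^ k ∣ X ^ (∑ i ∈ range (k + 1), i) :=
    pow_dvd_pow _ (by rw [sum_range_succ]; omega)
  convert mul_dvd_mul h₁ (X_pow_dvd_gaussBinom_mul_qPochhammer_sub_one k l) using 1
  ring

theorem PowerSeries.two_eq_zero_zmod_two : (2 : (ZMod 2)⟦X⟧) = 0 :=
  (map_ofNat (C (R := ZMod 2)) 2).symm.trans
    ((congrArg C (by decide : (2 : ZMod 2) = 0)).trans (map_zero C))

theorem coeff_prod_one_add_X_pow_pow_three {n d : ℕ} (hd : d ≤ n)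
    (h : ∀ k : ℕ, 2 * d ≠ k * (k + 1)) :
    coeff d (∏ i ∈ range n, (1 + (X : (ZMod 2)⟦X⟧) ^ (i + 1)) ^ 3) = 0 := by
  have hQ : coeff d (∏ i ∈ range n,
      ((1 + (X : ℚ⟦X⟧) ^ (i + 1)) ^ 2 * (1 - X ^ (i + 1)))) = 0 := by
    have := X_pow_dvd_iff.1 (X_pow_dvd_prod_sub_sum_triangular n) d (by omega)
    rw [map_sub, sub_eq_zero] at this
    rw [this, map_sum]
    refine sum_eq_zero fun k _ => ?_
    rw [coeff_X_pow, if_neg]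
    rintro rfl
    exact h k (two_mul_sum_range_succ_id k)
  have hZ : coeff d (∏ i ∈ range n,
      ((1 + (X : ℤ⟦X⟧) ^ (i + 1)) ^ 2 * (1 - X ^ (i + 1)))) = 0 := by
    apply Int.cast_injective (α := ℚ)
    rw [← eq_intCast (Int.castRingHom ℚ), ← coeff_map]
    simpa [map_prod] using hQ
  have h₂ := congrArg (Int.castRingHom (ZMod 2)) hZ
  rw [← coeff_map, map_zero] at h₂
  rw [← h₂]
  simp only [map_prod, map_mul, map_pow, map_add, map_sub, map_one, map_X]
  congr 1
  refine prod_congr rfl fun i _ => ?_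
  linear_combination (1 + X ^ (i + 1)) ^ 2 * X ^ (i + 1) * two_eq_zero_zmod_two

theorem exists_multiplicity_iff {p s a r m c : ℕ} (hs : s = p * r + a) (hm : 1 ≤ m) :
    (∃ j, j < 4 ∧ c ≡ j * a [MOD p] ∧ j * s ≤ c ∧ c ≤ j * s + p * (m - 1)) ↔
      ∃ j < 4, ∃ k < m, c = s * j + p * k := by
  have hmod (j : ℕ) : j * s ≡ j * a [MOD p] := by
    rw [hs, mul_add, mul_left_comm]
    simp [Nat.ModEq]
  refine exists_congr fun j => and_congr_right fun _ => ⟨?_, ?_⟩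
  · rintro ⟨h₁, h₂, h₃⟩
    obtain ⟨k, hk⟩ := (Nat.modEq_iff_dvd' h₂).1 ((hmod j).trans h₁.symm)
    obtain rfl : c = j * s + p * k := by omega
    rcases p.eq_zero_or_pos with rfl | hp
    · exact ⟨0, hm, by simp [mul_comm]⟩
    · have : k ≤ m - 1 := Nat.le_of_mul_le_mul_left (Nat.le_of_add_le_add_left h₃) hp
      exact ⟨k, by omega, by rw [mul_comm s]⟩
  · rintro ⟨k, hk, rfl⟩
    rw [mul_comm s]
    refine ⟨?_, Nat.le_add_right _ _, ?_⟩
    · simpa [Nat.ModEq] using hmod j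
    · gcongr
      omega

open Classical in
/-- The number of partitions all of whose multiplicities lie in a finite set `S ∋ 0` is, modulo
`2`, a coefficient of a finite product. -/
theorem exists_coeff_prod_eq_natCast_card (R : Type*) [CommRing R] (S : Finset ℕ) (h0 : 0 ∈ S)
    (n : ℕ) : ∃ M, n ≤ M ∧
      coeff n (∏ i ∈ range M, ∑ c ∈ S, (X : R⟦X⟧) ^ ((i + 1) * c)) =
        (Nat.card {π : n.Partition // ∀ i ∈ π.parts, π.parts.count i ∈ S} : R) := by
  let : TopologicalSpace R := ⊥
  have : DiscreteTopology R := ⟨rfl⟩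
  let := PowerSeries.WithPiTopology.instTopologicalSpace (R := R)
  let f : ℕ → ℕ → R := fun _ c => if c ∈ S then 1 else 0
  have hcard : (Nat.Partition.genFun f).coeff n =
      (Nat.card {π : n.Partition // ∀ i ∈ π.parts, π.parts.count i ∈ S} : R) := by
    rw [Nat.Partition.coeff_genFun, Nat.card_eq_fintype_card, Fintype.card_subtype,
      Finset.natCast_card_filter]
    refine sum_congr rfl fun π _ => ?_
    simp only [Finsupp.prod, f, prod_boole, Multiset.toFinsupp_support, Multiset.mem_toFinset,
      Multiset.toFinsupp_apply]
  have hfactor (i : ℕ) : (1 : R⟦X⟧) + ∑' j, f (i + 1) (j + 1) • X ^ ((i + 1) * (j + 1)) =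
      ∑ c ∈ S, X ^ ((i + 1) * c) := by
    rw [tsum_eq_sum (s := range (S.sup id))]
    · have h : ∑ c ∈ S, (X : R⟦X⟧) ^ ((i + 1) * c) =
          ∑ c ∈ range (S.sup id + 1), f (i + 1) c • X ^ ((i + 1) * c) := by
        have hS : S ⊆ range (S.sup id + 1) := fun c hc =>
          mem_range.2 (Nat.lt_succ_of_le (le_sup (f := id) hc))
        simp only [f, ite_smul, one_smul, zero_smul]
        rw [← sum_filter, filter_mem_eq_inter, inter_eq_right.2 hS]
      rw [h, sum_range_succ', add_comm]
      simp [f, h0]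
    · intro j hj
      have : j + 1 ∉ S := fun h => hj (mem_range.2 (le_sup (f := id) h))
      simp [f, this]
  have ht := (Nat.Partition.hasProd_genFun f).tendsto_prod_nat
  have ht := ((PowerSeries.WithPiTopology.continuous_coeff R n).tendsto _).comp ht
  rw [nhds_discrete, Filter.tendsto_pure] at ht
  obtain ⟨M, hM, hn⟩ := (ht.and (Filter.eventually_ge_atTop n)).exists
  refine ⟨M, hn, ?_⟩
  rw [← hcard, ← hM]
  simp only [Function.comp_apply, hfactor]

/-- The multiplicities allowed in the definition of `b p a r m 4`, where `s = p * r + a`. -/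
def multiplicities (p s m : ℕ) : Finset ℕ :=
  (range 4 ×ˢ range m).image fun jk => s * jk.1 + p * jk.2

theorem sum_multiplicities {p s : ℕ} (hp5 : 5 ≤ p) (hps : p.Coprime s) (m i : ℕ) :
    ∑ c ∈ multiplicities p s m, (X : (ZMod 2)⟦X⟧) ^ (i * c) =
      (1 + (X ^ s) ^ i) ^ 3 * ∑ k ∈ range m, (X ^ p) ^ (i * k) := by
  have hcube (z : (ZMod 2)⟦X⟧) : (1 + z) ^ 3 = ∑ j ∈ range 4, z ^ j := by
    simp only [sum_range_succ, sum_range_zero]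
    linear_combination (z + z ^ 2) * two_eq_zero_zmod_two
  rw [multiplicities, sum_image, sum_product, hcube, sum_mul_sum]
  · refine sum_congr rfl fun j _ => sum_congr rfl fun k _ => ?_
    ring
  · rintro ⟨j, k⟩ hjk ⟨j', k'⟩ hjk' h
    simp only [coe_product, Set.mem_prod, SetLike.mem_coe, mem_range] at hjk hjk' h
    have hmod : s * j ≡ s * j' [MOD p] := by
      have := congrArg (· % p) h
      simpa [Nat.ModEq] using this
    have hj : j = j' := (Nat.ModEq.cancel_left_of_coprime hps hmod).eq_of_lt_of_lt
      (by omega) (by omega)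
    subst hj
    have hk : k = k' := Nat.eq_of_mul_eq_mul_left (by omega) (Nat.add_left_cancel h)
    rw [hk]

theorem coeff_prod_sum_multiplicities {p s M N : ℕ} (hp5 : 5 ≤ p) (hps : p.Coprime s) (m : ℕ)
    (hN : N ≤ M) (h : ∀ d l k : ℕ, s * d + p * l = N → 2 * d ≠ k * (k + 1)) :
    coeff N (∏ i ∈ range M, ∑ c ∈ multiplicities p s m, (X : (ZMod 2)⟦X⟧) ^ ((i + 1) * c)) = 0 := by
  have hp0 : p ≠ 0 := by omega
  have hs0 : s ≠ 0 := by
    rintro rfl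
    rw [Nat.coprime_zero_right] at hps
    omega
  have hs : ∏ i ∈ range M, (1 + ((X : (ZMod 2)⟦X⟧) ^ s) ^ (i + 1)) ^ 3 =
      expand s hs0 (∏ i ∈ range M, (1 + X ^ (i + 1)) ^ 3) := by
    simp [map_prod]
  have hp : ∏ i ∈ range M, ∑ k ∈ range m, ((X : (ZMod 2)⟦X⟧) ^ p) ^ ((i + 1) * k) =
      expand p hp0 (∏ i ∈ range M, ∑ k ∈ range m, X ^ ((i + 1) * k)) := by
    simp [map_prod]
  simp only [sum_multiplicities hp5 hps, prod_mul_distrib]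
  rw [hs, hp, coeff_mul]
  refine sum_eq_zero fun uv huv => ?_
  rw [HasAntidiagonal.mem_antidiagonal] at huv
  by_cases hu : s ∣ uv.1
  · by_cases hv : p ∣ uv.2
    · obtain ⟨d, hd⟩ := hu
      obtain ⟨l, hl⟩ := hv
      rw [hd, hl] at huv
      rw [hd, coeff_expand_mul, coeff_prod_one_add_X_pow_pow_three, zero_mul]
      · exact (Nat.le_mul_of_pos_left d (Nat.pos_of_ne_zero hs0)).trans (by omega)
      · exact fun k => h d l k huv
    · rw [coeff_expand_of_not_dvd _ _ _ hv, mul_zero]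
  · rw [coeff_expand_of_not_dvd _ _ _ hu, zero_mul]

/-- Let `p ≥ 5` be prime, `a` a positive integer not divisible by `p`, `r ≥ 0`, `m ≥ 1`,
and let `0 ≤ t < p` be such that `8·t·a⁻¹ + 1` is a quadratic nonresidue modulo `p`
(`a⁻¹` being the inverse of `a` modulo `p`). Then `b_{4,r,a,m}(pn + t) ≡ 0 (mod 2)` for
all `n ≥ 0`. -/
theorem b_four_congruence (p a r m t : ℕ) (hp : p.Prime) (hp5 : 5 ≤ p)
    (ha : 0 < a) (hpa : ¬ p ∣ a) (hm : 1 ≤ m) (ht : t < p)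
    (hqnr : ¬ IsSquare (8 * (t : ZMod p) * (a : ZMod p)⁻¹ + 1)) :
    ∀ n : ℕ, b p a r m 4 (p * n + t) % 2 = 0 := by
  intro n
  have : Fact p.Prime := ⟨hp⟩
  set s := p * r + a with hs
  have hps : p.Coprime s := (Nat.Prime.coprime_iff_not_dvd hp).2 fun h =>
    hpa ((Nat.dvd_add_right (dvd_mul_right p r)).1 h)
  have h0 : 0 ∈ multiplicities p s m :=
    mem_image.2 ⟨(0, 0), by simp; omega, by simp⟩
  obtain ⟨M, hM, hcoeff⟩ :=
    exists_coeff_prod_eq_natCast_card (ZMod 2) (multiplicities p s m) h0 (p * n + t)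
  have hb : b p a r m 4 (p * n + t) = Nat.card {π : (p * n + t).Partition //
      ∀ i ∈ π.parts, π.parts.count i ∈ multiplicities p s m} := by
    refine Nat.card_congr (Equiv.subtypeEquivRight fun π => forall₂_congr fun i _ => ?_)
    rw [← hs, exists_multiplicity_iff hs hm]
    simp only [multiplicities, mem_image, mem_product, mem_range, Prod.exists, and_assoc,
      exists_and_left, eq_comm]
  rw [← hb, coeff_prod_sum_multiplicities hp5 hps m hM, eq_comm,
    ZMod.natCast_eq_zero_iff] at hcoeff
  · exact Nat.mod_eq_zero_of_dvd hcoeff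
  · intro d l k hdl hk
    apply hqnr
    have ha0 : (a : ZMod p) ≠ 0 := by rwa [Ne, ZMod.natCast_eq_zero_iff]
    have ht' : (a : ZMod p) * d = t := by
      have := congrArg (Nat.cast (R := ZMod p)) hdl
      simpa [hs] using this
    have hk' : (2 : ZMod p) * d = k * (k + 1) := by
      exact_mod_cast congrArg (Nat.cast (R := ZMod p)) hk
    refine ⟨2 * k + 1, ?_⟩
    rw [← ht']
    field_simp
    linear_combination 4 * hk'
end

section
/- For every natural number n, b_{2,r,a,m}(n) ≡ Σ p(k) (mod 2), where the (finite) sum is over all triples (s, j, k) with s, j ∈ ℤ, k ∈ ℤ_{≥0}, and n = s(pr + a)(3s + 1)/2 + pm·j(3j + 1)/2 + pk, and where p(k) denotes the number of partitions of k. -/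
open PowerSeries PowerSeries.WithPiTopology Finset

/-- The multiplicities allowed in the partitions counted by `b p a r m 2`. -/
def allowedMultiplicities (p c m : ℕ) : Finset ℕ :=
  (range m).image (fun k ↦ p * k) ∪ (range m).image (fun k ↦ c + p * k)

theorem mem_allowedMultiplicities_iff {p a r m : ℕ} (hp : 0 < p) (hm : 1 ≤ m) (x : ℕ) :
    x ∈ allowedMultiplicities p (p * r + a) m ↔
      ∃ j, j < 2 ∧ x ≡ j * a [MOD p] ∧ j * (p * r + a) ≤ x ∧
        x ≤ j * (p * r + a) + p * (m - 1) := by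
  simp only [allowedMultiplicities, mem_union, mem_image, mem_range]
  constructor
  · rintro (⟨k, hk, rfl⟩ | ⟨k, hk, rfl⟩)
    · refine ⟨0, by simp, by simp [Nat.ModEq], by simp, ?_⟩
      simpa using Nat.mul_le_mul_left p (by omega : k ≤ m - 1)
    · refine ⟨1, by simp, ?_, by simp, ?_⟩
      · rw [show p * r + a + p * k = a + p * (r + k) by ring]
        simp [Nat.ModEq]
      · simpa using Nat.mul_le_mul_left p (by omega : k ≤ m - 1)
  · rintro ⟨j, hj, hmod, hle, hge⟩
    interval_cases j
    · obtain ⟨k, rfl⟩ : p ∣ x := (Nat.modEq_zero_iff_dvd).1 (by simpa using hmod)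
      have : k ≤ m - 1 := Nat.le_of_mul_le_mul_left (by simpa using hge) hp
      exact Or.inl ⟨k, by omega, rfl⟩
    · obtain ⟨y, rfl⟩ := Nat.exists_eq_add_of_le (by simpa using hle)
      have hy : p ∣ y := by
        rw [one_mul, show p * r + a + y = a + (p * r + y) by ring] at hmod
        have h0 : p * r + y ≡ 0 [MOD p] := Nat.ModEq.add_left_cancel' a (by simpa using hmod)
        exact (Nat.dvd_add_right (dvd_mul_right p r)).1 (Nat.modEq_zero_iff_dvd.1 h0)
      obtain ⟨k, rfl⟩ := hy
      have : k ≤ m - 1 := Nat.le_of_mul_le_mul_left (by simpa using hge) hp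
      exact Or.inr ⟨k, by omega, rfl⟩

theorem sum_allowedMultiplicities {M : Type*} [AddCommMonoid M] {p c m : ℕ} (hp : 0 < p)
    (hc : ¬ p ∣ c) (g : ℕ → M) :
    ∑ j ∈ allowedMultiplicities p c m, g j =
      ∑ k ∈ range m, g (p * k) + ∑ k ∈ range m, g (c + p * k) := by
  rw [allowedMultiplicities, sum_union, sum_image, sum_image]
  · intro x _ y _ h
    exact Nat.eq_of_mul_eq_mul_left hp (by simpa using h)
  · intro x _ y _ h
    exact Nat.eq_of_mul_eq_mul_left hp (by simpa using h)
  · simp only [disjoint_left, mem_image, not_exists, not_and]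
    rintro _ ⟨k, _, rfl⟩ l _ h
    exact hc ((Nat.dvd_add_left (dvd_mul_right p l)).1 (h ▸ dvd_mul_right p k))

section PowerSeries

variable (R : Type*) [TopologicalSpace R] [T2Space R]

theorem one_add_tsum_allowedMultiplicities [CommSemiring R] [IsTopologicalSemiring R]
    {p c m : ℕ} (hp : 0 < p) (hc : ¬ p ∣ c) (hm : 1 ≤ m) (i : ℕ) :
    (1 + ∑' j, (if j + 1 ∈ allowedMultiplicities p c m then (1 : R) else 0) •
      X ^ (i * (j + 1)) : R⟦X⟧) = (∑ k ∈ range m, (X ^ (i * p)) ^ k) * (1 + X ^ (i * c)) := by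
  set g : ℕ → R⟦X⟧ := fun j ↦
    (if j ∈ allowedMultiplicities p c m then (1 : R) else 0) • X ^ (i * j) with hg
  have h0 : g 0 = 1 := by
    have : 0 ∈ allowedMultiplicities p c m := by
      simp only [allowedMultiplicities, mem_union, mem_image, mem_range]
      exact Or.inl ⟨0, hm, rfl⟩
    simp [hg, this]
  have hz : ∀ j ∉ allowedMultiplicities p c m, g j = 0 := fun j hj ↦ by simp [hg, hj]
  have hs : Summable fun j ↦ g (j + 1) := by
    refine summable_of_hasFiniteSupport ?_
    refine ((allowedMultiplicities p c m).finite_toSet.preimage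
      (add_left_injective 1).injOn).subset fun j hj ↦ ?_
    by_contra h
    exact hj (hz _ h)
  calc _ = g 0 + ∑' j, g (j + 1) := by rw [h0]
    _ = ∑ j ∈ allowedMultiplicities p c m, X ^ (i * j) := by
      rw [← tsum_eq_zero_add' hs, tsum_eq_sum hz]
      exact sum_congr rfl fun j hj ↦ by simp [hg, hj]
    _ = _ := by
      rw [sum_allowedMultiplicities hp hc, mul_add, mul_one, sum_mul]
      congr 1 <;> exact sum_congr rfl fun k _ ↦ by ring

omit [T2Space R] in
theorem PowerSeries.WithPiTopology.continuous_expand [CommRing R] (k : ℕ) (hk : k ≠ 0) :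
    Continuous (expand k hk : R⟦X⟧ →ₐ[R] R⟦X⟧) := by
  refine continuous_iff_continuousAt.2 fun φ ↦ ?_
  rw [ContinuousAt, tendsto_iff_coeff_tendsto]
  intro d
  simp_rw [coeff_expand]
  split_ifs
  · exact (continuous_coeff R _).continuousAt
  · exact tendsto_const_nhds

omit [T2Space R] in
theorem hasProd_expand_pentagonalSeries [CommRing R] (k : ℕ) (hk : k ≠ 0) :
    HasProd (fun i ↦ 1 - X ^ ((i + 1) * k) : ℕ → R⟦X⟧) (expand k hk (pentagonalSeries R)) := by
  convert (hasProd_one_sub_X_pow R).map (expand k hk : R⟦X⟧ →ₐ[R] R⟦X⟧)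
    (continuous_expand R k hk) using 2 with i
  simp [← pow_mul, mul_comm]

omit [TopologicalSpace R] [T2Space R] in
theorem powerSeriesMk_card_partition_mul_pentagonalSeries [CommRing R] :
    PowerSeries.mk (fun n ↦ (Nat.card n.Partition : R)) * pentagonalSeries R = 1 := by
  let _ : TopologicalSpace R := ⊥
  have _ : DiscreteTopology R := ⟨rfl⟩
  have h := (Nat.Partition.hasProd_powerSeriesMk_card_restricted R (fun _ ↦ True)).mul
    (hasProd_one_sub_X_pow R)
  have h1 : ∀ i : ℕ, ((if True then ∑' j : ℕ, X ^ ((i + 1) * j) else 1) *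
      (1 - X ^ (i + 1)) : R⟦X⟧) = 1 := fun i ↦ by
    simp_rw [if_true, pow_mul]
    exact tsum_pow_mul_one_sub_of_constantCoeff_eq_zero (by simp)
  simp_rw [h1] at h
  simpa [Nat.Partition.restricted, Nat.card_eq_fintype_card] using h.unique hasProd_one

end PowerSeries

theorem neg_eq_self_zmod_two (φ : (ZMod 2)⟦X⟧) : -φ = φ := by
  ext n
  rw [map_neg, ZMod.neg_eq_self_mod_two]

theorem powerSeriesMk_b_two {p a r m : ℕ} (hp : 0 < p) (hm : 1 ≤ m) :
    PowerSeries.mk (fun n ↦ (b p a r m 2 n : ZMod 2)) =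
      Nat.Partition.genFun (fun _ x ↦
        if x ∈ allowedMultiplicities p (p * r + a) m then (1 : ZMod 2) else 0) := by
  classical
  ext n
  simp_rw [coeff_mk, Nat.Partition.coeff_genFun, Finsupp.prod, prod_boole]
  rw [b, Nat.card_eq_fintype_card, Fintype.card_subtype, card_filter]
  simp [mem_allowedMultiplicities_iff hp hm]

theorem powerSeriesMk_b_two_eq_mul {p a r m : ℕ} (hp : 2 ≤ p)
    (hco : Nat.gcd a p = 1) (hm : 1 ≤ m) (hp0 : p ≠ 0) (hc0 : p * r + a ≠ 0)
    (hpm0 : p * m ≠ 0) :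
    PowerSeries.mk (fun n ↦ (b p a r m 2 n : ZMod 2)) =
      expand (p * r + a) hc0 (pentagonalSeries (ZMod 2)) *
        (expand (p * m) hpm0 (pentagonalSeries (ZMod 2)) *
          expand p hp0 (PowerSeries.mk fun n ↦ (Nat.card n.Partition : ZMod 2))) := by
  have hc : ¬ p ∣ p * r + a := fun h ↦ by
    have : p ∣ Nat.gcd a p := Nat.dvd_gcd ((Nat.dvd_add_right (dvd_mul_right p r)).1 h) dvd_rfl
    rw [hco, Nat.dvd_one] at this
    omega
  have h := Nat.Partition.hasProd_genFun (fun _ x ↦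
    if x ∈ allowedMultiplicities p (p * r + a) m then (1 : ZMod 2) else 0)
  rw [← powerSeriesMk_b_two (by omega) hm] at h
  simp_rw [one_add_tsum_allowedMultiplicities (ZMod 2) (by omega : 0 < p) hc hm] at h
  have hl := h.mul (hasProd_expand_pentagonalSeries (ZMod 2) p hp0)
  have hr := (hasProd_expand_pentagonalSeries (ZMod 2) _ hc0).mul
    (hasProd_expand_pentagonalSeries (ZMod 2) _ hpm0)
  have key : PowerSeries.mk (fun n ↦ (b p a r m 2 n : ZMod 2)) *
      expand p hp0 (pentagonalSeries (ZMod 2)) =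
      expand (p * r + a) hc0 (pentagonalSeries (ZMod 2)) *
        expand (p * m) hpm0 (pentagonalSeries (ZMod 2)) := by
    refine hl.unique ?_
    refine HasProd.congr_fun hr fun i ↦ ?_
    rw [mul_right_comm, geom_sum_mul_neg, mul_comm, ← pow_mul, mul_assoc (i + 1) p m,
      sub_eq_add_neg 1 (X ^ ((i + 1) * (p * r + a))), neg_eq_self_zmod_two]
  have hinv := congrArg (expand p hp0) (powerSeriesMk_card_partition_mul_pentagonalSeries (ZMod 2))
  rw [map_mul, map_one, mul_comm] at hinv
  rw [← mul_assoc, ← key, mul_assoc, hinv, mul_one]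

section Monomial

variable {R : Type*} [CommSemiring R] [TopologicalSpace R]

theorem summable_monomial_of_finite {ι : Type*} {e : ι → ℕ} (u : ι → R)
    (he : ∀ n, {i | e i ≤ n}.Finite) : Summable fun i ↦ monomial (e i) (u i) := by
  refine (summable_iff_summable_coeff R).2 fun d ↦ summable_of_hasFiniteSupport ?_
  refine (he d).subset fun i hi ↦ ?_
  by_contra h
  replace h : ¬ e i ≤ d := h
  exact hi ((coeff_monomial _ _ _).trans (if_neg (by omega)))

theorem finite_setOf_add_le {ι κ : Type*} {e : ι → ℕ} {e' : κ → ℕ}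
    (he : ∀ n, {i | e i ≤ n}.Finite) (he' : ∀ n, {i | e' i ≤ n}.Finite) (n : ℕ) :
    {x : ι × κ | e x.1 + e' x.2 ≤ n}.Finite :=
  ((he n).prod (he' n)).subset fun x (hx : e x.1 + e' x.2 ≤ n) ↦
    ⟨(Nat.le_add_right _ _).trans hx, (Nat.le_add_left _ _).trans hx⟩

theorem HasSum.monomial_mul [T3Space R] [IsTopologicalSemiring R]
    {ι κ : Type*} {e : ι → ℕ} {e' : κ → ℕ} {u : ι → R} {u' : κ → R} {F G : R⟦X⟧}
    (he : ∀ n, {i | e i ≤ n}.Finite) (he' : ∀ n, {i | e' i ≤ n}.Finite)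
    (hF : HasSum (fun i ↦ monomial (e i) (u i)) F)
    (hG : HasSum (fun i ↦ monomial (e' i) (u' i)) G) :
    HasSum (fun x : ι × κ ↦ monomial (e x.1 + e' x.2) (u x.1 * u' x.2)) (F * G) := by
  have hs := summable_monomial_of_finite (e := fun x : ι × κ ↦ e x.1 + e' x.2)
    (fun x ↦ u x.1 * u' x.2) (finite_setOf_add_le he he')
  have : T3Space R⟦X⟧ := inferInstanceAs (T3Space ((Unit →₀ ℕ) → R))
  have hmul (x : ι × κ) : monomial (e x.1 + e' x.2) (u x.1 * u' x.2) =
      monomial (e x.1) (u x.1) * monomial (e' x.2) (u' x.2) :=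
    (monomial_mul_monomial _ _ _ _).symm
  rw [funext hmul] at hs ⊢
  exact HasSum.mul (f := fun i ↦ monomial (e i) (u i)) (g := fun i ↦ monomial (e' i) (u' i))
    hF hG hs

end Monomial

theorem hasSum_expand_pentagonalSeries_two (k : ℕ) (hk : k ≠ 0) :
    HasSum (fun s : ℤ ↦ monomial (k * pentagonal (-s)) (1 : ZMod 2))
      (expand k hk (pentagonalSeries (ZMod 2))) := by
  have h := (hasSum_pentagonalSeries (ZMod 2)).map
    (expand k hk : (ZMod 2)⟦X⟧ →ₐ[ZMod 2] (ZMod 2)⟦X⟧) (continuous_expand (ZMod 2) k hk)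
  rw [← (Equiv.neg ℤ).hasSum_iff] at h
  convert h using 2 with s
  have h1 : ((Int.negOnePow (-s) : ℤ) : (ZMod 2)⟦X⟧) = 1 := by
    rcases Int.even_or_odd (-s) with hs | hs
    · simp [Int.negOnePow_even _ hs]
    · simp [Int.negOnePow_odd _ hs, neg_eq_self_zmod_two]
  simp only [Function.comp_apply, Equiv.neg_apply, h1, one_mul, X_pow_eq, expand_monomial]

theorem hasSum_expand_mk {R : Type*} [CommRing R] [TopologicalSpace R] (k : ℕ)
    (hk : k ≠ 0) (f : ℕ → R) :
    HasSum (fun l ↦ monomial (k * l) (f l)) (expand k hk (PowerSeries.mk f)) := by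
  convert (hasSum_of_monomials_self (PowerSeries.mk f)).map
    (expand k hk : R⟦X⟧ →ₐ[R] R⟦X⟧) (continuous_expand R k hk) using 2 with l
  simp

theorem finite_setOf_mul_le {ι : Type*} {e : ι → ℕ} (he : e.Injective) {k : ℕ} (hk : k ≠ 0)
    (n : ℕ) : {i | k * e i ≤ n}.Finite :=
  ((Set.finite_Iic n).preimage he.injOn).subset fun i (hi : k * e i ≤ n) ↦
    (Nat.le_mul_of_pos_left _ (Nat.pos_of_ne_zero hk)).trans hi

theorem mul_three_mul_add_one_ediv_two (c s : ℤ) :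
    c * s * (3 * s + 1) / 2 = c * (pentagonal (-s) : ℤ) := by
  rw [mul_assoc, ← two_mul_natCast_pentagonal_neg, mul_left_comm]
  exact Int.mul_ediv_cancel_left _ two_ne_zero

/-- For every `n`, `b_{2,r,a,m}(n) ≡ Σ p(k) (mod 2)`, summed over all triples
`(s, j, k)` with `s, j ∈ ℤ`, `k ∈ ℤ≥0` and
`n = s(pr+a)(3s+1)/2 + pm·j(3j+1)/2 + pk`, where `p(k)` is the number of
partitions of `k`. Only finitely many terms of the sum are nonzero. -/
theorem b_two_mod_two (p a r m : ℕ) (hp : 2 ≤ p) (ha : 0 < a)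
    (hco : Nat.gcd a p = 1) (hm : 1 ≤ m) (n : ℕ) :
    (b p a r m 2 n : ℤ) ≡
      (∑' x : ℤ × ℤ × ℕ,
        if (n : ℤ) = x.1 * ((p : ℤ) * r + a) * (3 * x.1 + 1) / 2
            + (p : ℤ) * m * x.2.1 * (3 * x.2.1 + 1) / 2 + (p : ℤ) * x.2.2
        then (Nat.card (Nat.Partition x.2.2) : ℤ) else 0) [ZMOD 2] := by
  have hp0 : p ≠ 0 := by omega
  have hc0 : p * r + a ≠ 0 := by omega
  have hpm0 : p * m ≠ 0 := Nat.mul_ne_zero hp0 (by omega)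
  have hpent : Function.Injective fun s : ℤ ↦ pentagonal (-s) :=
    pentagonal_injective.comp neg_injective
  let e₁ : ℤ → ℕ := fun s ↦ (p * r + a) * pentagonal (-s)
  let e₂ : ℤ → ℕ := fun s ↦ p * m * pentagonal (-s)
  let e₃ : ℕ → ℕ := fun k ↦ p * k
  let e₂₃ : ℤ × ℕ → ℕ := fun x ↦ e₂ x.1 + e₃ x.2
  have hf₁ : ∀ N, {i | e₁ i ≤ N}.Finite := finite_setOf_mul_le hpent hc0
  have hf₂ : ∀ N, {i | e₂ i ≤ N}.Finite := finite_setOf_mul_le hpent hpm0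
  have hf₃ : ∀ N, {i | e₃ i ≤ N}.Finite := finite_setOf_mul_le Function.injective_id hp0
  have hf₂₃ : ∀ N, {i | e₂₃ i ≤ N}.Finite := finite_setOf_add_le hf₂ hf₃
  have hsum₂₃ := HasSum.monomial_mul (e := e₂) (e' := e₃) (u := fun _ ↦ 1) hf₂ hf₃
    (hasSum_expand_pentagonalSeries_two _ hpm0)
    (hasSum_expand_mk p hp0 fun n ↦ (Nat.card n.Partition : ZMod 2))
  have hsum := HasSum.monomial_mul (e := e₁) (e' := e₂₃) (u := fun _ ↦ 1) hf₁ hf₂₃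
    (hasSum_expand_pentagonalSeries_two _ hc0) hsum₂₃
  rw [← powerSeriesMk_b_two_eq_mul hp hco hm] at hsum
  have hcoeff := hsum.map (coeff n) (continuous_coeff (ZMod 2) n)
  rw [coeff_mk] at hcoeff
  have hcond : ∀ x : ℤ × ℤ × ℕ,
      ((n : ℤ) = x.1 * ((p : ℤ) * r + a) * (3 * x.1 + 1) / 2
        + (p : ℤ) * m * x.2.1 * (3 * x.2.1 + 1) / 2 + (p : ℤ) * x.2.2) ↔
      n = (p * r + a) * pentagonal (-x.1) + (p * m * pentagonal (-x.2.1) + p * x.2.2) := by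
    intro x
    rw [mul_comm x.1, mul_three_mul_add_one_ediv_two, mul_three_mul_add_one_ediv_two, add_assoc]
    exact_mod_cast Iff.rfl
  simp_rw [hcond]
  have hZ : Summable fun x : ℤ × ℤ × ℕ ↦
      if n = (p * r + a) * pentagonal (-x.1) + (p * m * pentagonal (-x.2.1) + p * x.2.2)
      then (Nat.card (Nat.Partition x.2.2) : ℤ) else 0 := by
    refine summable_of_hasFiniteSupport ((finite_setOf_add_le hf₁ hf₂₃ n).subset fun x hx ↦ ?_)
    by_contra h
    exact hx (if_neg fun h' ↦ h h'.ge)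
  have hmap := hZ.hasSum.map (Int.castRingHom (ZMod 2)) continuous_of_discreteTopology
  refine (ZMod.intCast_eq_intCast_iff _ _ 2).1 ?_
  rw [Int.cast_natCast]
  refine hcoeff.unique ?_
  refine HasSum.congr_fun hmap fun x ↦ ?_
  simp only [Function.comp_apply, coeff_monomial, one_mul, Int.coe_castRingHom, apply_ite Int.cast,
    Int.cast_natCast, Int.cast_zero]
  rfl
end
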